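/- (Marchwicki–Nowakowski–Prus-Wiśniowski) For every m, p ∈ ℕ ∪ {∞} with 2 ≤ m ≤ p, there exists a sequence x : ℕ → ℝ of positive terms with ∑ₙ x(n) < ∞ whose achievement set C := E(x) is a Cantor set and such that, writing C_k := C + ⋯ + C (the k-fold algebraic sumset), for every k ≥ 1: C_k is a Cantor set if k < m; C_k is a Cantorval if m ≤ k < p; and C_k is a nondegenerate compact interval if k ≥ p. -/

import Mathlib

/-!
The `k`-fold sumset of the achievement set of `x` is the set `digitSums x k` of all sums
`∑ c n * x n` with digits `0 ≤ c n ≤ k`, so a single positive sequence has to be built whose digit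
sums have the prescribed type for every `k`.

Three criteria decide the type.
* `digitSums_eq_Icc` (Kakeya): if each term is at most `k` times the following remainder, the digit
  sums fill an interval.
* `isCantorSet_digitSums`: if finite sets `F` of indices exist for which `(k + 1) ^ |F|` times `k`
  times the sum of the terms outside `F` is arbitrarily small, the digit sums form a null set. They
  are compact without isolated points, and a compact perfect set of reals with empty interior is
  homeomorphic to the Cantor ternary set (`isCantorSet_of_perfect`).
* `isCantorval_digitSums`: if the digit sums omit points and contain intervals arbitrarily close to
  `0`, they form a Cantorval, because the local picture at `0` is reproduced at every gap endpoint.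

For finite `m` put `q = 1 / (m + 1)` and take the terms `a n + q ^ n` and `a n` for all `n`
(`exists_sequence`). Giving the two terms of a pair the digits `e n` and `m - e n` yields
`m * a n + e n * q ^ n`, and digits up to `m` on the geometric series already fill an interval:
hence intervals near `0` as soon as `k ≥ m`, whatever `a` is. The sequence `a` is constant, equal to
`P j * q ^ T j / m`, on the block of indices ending at `T j`, and `T` grows so fast that what follows
the block is negligible (`exists_blocks`).
* At the end of a block the remainder of the series is about `q ^ T j / m`, that is `1 / P j` times
  the smallest preceding term; so there are gaps near `0` for `k < P j`, while Kakeya's criterion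
  holds if `k ≥ P j` for all `j`. Here `P` is the constant `p`, or increases to infinity if `p = ∞`.
* For `k < m` take for `F` the indices of the pairs up to the end of a block, and those of the terms
  `a n + q ^ n` up to a large multiple `N` of it. Then `(k + 1) ^ |F|` is roughly `m ^ N`, and the
  sum outside `F` is roughly `q ^ N`, so that `m * q < 1` makes the product small.

For `m = ∞` the sequence `2 ^ (-n ^ 2)` decreases fast enough for every `k` (`exists_sequence_top`).
-/

open Set Filter Topology MeasureTheory
open scoped Pointwise

/-- The achievement set (set of subsums) of the series `∑_{n ≥ 1} x n`
(sequences are indexed by `n ≥ 1`; the value `x 0` is irrelevant). -/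
def achievementSet (x : ℕ → ℝ) : Set ℝ :=
  {y : ℝ | ∃ A : Set ℕ, A ⊆ {n | 1 ≤ n} ∧ HasSum (fun n : A => x (n : ℕ)) y}

/-- The `n`-th remainder `r n = ∑_{i > n} x i` of a series. -/
noncomputable def remainder (x : ℕ → ℝ) (n : ℕ) : ℝ :=
  ∑' i : {i : ℕ // n < i}, x (i : ℕ)

/-- The set of Kakeya conditions `K(x) = {n ≥ 1 : x n > r n}`. -/
def kakeyaSet (x : ℕ → ℝ) : Set ℕ :=
  {n : ℕ | 1 ≤ n ∧ remainder x n < x n}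

/-- A Cantor set: a set homeomorphic to the Cantor ternary set. -/
def IsCantorSet (A : Set ℝ) : Prop :=
  Nonempty (A ≃ₜ cantorSet)

/-- A multi-interval set: the union of finitely many (at least one)
nondegenerate compact intervals. -/
def IsMultiInterval (A : Set ℝ) : Prop :=
  ∃ S : Finset (ℝ × ℝ), S.Nonempty ∧ (∀ p ∈ S, p.1 < p.2) ∧
    A = ⋃ p ∈ S, Set.Icc p.1 p.2

/-- The gaps of a set `A ⊆ ℝ`: the bounded connected components of its complement. -/
def gaps (A : Set ℝ) : Set (Set ℝ) :=
  {G | (∃ x ∉ A, G = connectedComponentIn Aᶜ x) ∧ Bornology.IsBounded G}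

/-- The nondegenerate connected components of a set `A ⊆ ℝ`. -/
def intervalComponents (A : Set ℝ) : Set (Set ℝ) :=
  {I | (∃ x ∈ A, I = connectedComponentIn A x) ∧ ¬ I.Subsingleton}

/-- A Cantorval: a nonempty compact subset of `ℝ` possessing at least one gap and at
least one nondegenerate component, such that both endpoints of every gap are
accumulation points both of other gaps and of nondegenerate components. -/
def IsCantorval (A : Set ℝ) : Prop :=
  A.Nonempty ∧ IsCompact A ∧ (gaps A).Nonempty ∧ (intervalComponents A).Nonempty ∧
    ∀ G ∈ gaps A, ∀ p ∈ ({sInf G, sSup G} : Set ℝ),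
      (∀ ε > (0 : ℝ), ∃ G' ∈ gaps A, G' ≠ G ∧ (G' ∩ Metric.ball p ε).Nonempty) ∧
      (∀ ε > (0 : ℝ), ∃ I ∈ intervalComponents A, (I ∩ (Metric.ball p ε \ {p})).Nonempty)

/-- The `k`-fold algebraic sumset `C + ⋯ + C` (with `iterSumSet C 1 = C`). -/
def iterSumSet (C : Set ℝ) : ℕ → Set ℝ
  | 0 => {0}
  | n + 1 => iterSumSet C n + C

/-! ### Compact perfect sets of reals with empty interior are Cantor sets -/

/-- `[a, b]` is a nondegenerate interval with endpoints in `A`, each of which is approximated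
by points of `A` from inside the interval. -/
def GoodPair (A : Set ℝ) (a b : ℝ) : Prop :=
  a ∈ A ∧ b ∈ A ∧ a < b ∧ (∀ ε > 0, ∃ y ∈ A, a < y ∧ y < a + ε) ∧
    (∀ ε > 0, ∃ y ∈ A, b - ε < y ∧ y < b)

/-- No point of `A` is isolated in `A`. -/
def NoIsolated (A : Set ℝ) : Prop :=
  ∀ a ∈ A, ∀ ε > 0, ∃ b ∈ A, b ≠ a ∧ |b - a| < ε

/-- A good pair splits at a point of the middle third that is not in `A` into two shorter good
pairs which still contain all of `A ∩ [a, b]`. -/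
lemma GoodPair.split {A : Set ℝ} (hc : IsCompact A) (hi : interior A = ∅) (hp : NoIsolated A)
    {a b : ℝ} (h : GoodPair A a b) :
    ∃ a' b', GoodPair A a a' ∧ GoodPair A b' b ∧ a' < b' ∧ a' - a ≤ 2 / 3 * (b - a) ∧
      b - b' ≤ 2 / 3 * (b - a) ∧ ∀ y ∈ A, a ≤ y → y ≤ b → y ≤ a' ∨ b' ≤ y := by
  obtain ⟨ha, hb, hab, har, hbl⟩ := h
  have hc1 : ∃ c ∈ Ioo (a + (b - a) / 3) (b - (b - a) / 3), c ∉ A := by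
    by_contra! hcon
    have : Ioo (a + (b - a) / 3) (b - (b - a) / 3) ⊆ interior A :=
      interior_maximal hcon isOpen_Ioo
    rw [hi] at this
    have hm : (a + b) / 2 ∈ Ioo (a + (b - a) / 3) (b - (b - a) / 3) := by
      constructor <;> linarith
    exact this hm
  obtain ⟨c, ⟨hca, hcb⟩, hcA⟩ := hc1
  obtain ⟨a', ⟨ha'A, ha'c⟩, hmax⟩ :=
    (hc.inter_right isClosed_Iic : IsCompact (A ∩ Iic c)).exists_isGreatest
      ⟨a, ha, by simp only [mem_Iic]; linarith⟩
  obtain ⟨b', ⟨hb'A, hb'c⟩, hmin⟩ :=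
    (hc.inter_right isClosed_Ici : IsCompact (A ∩ Ici c)).exists_isLeast
      ⟨b, hb, by simp only [mem_Ici]; linarith⟩
  have ha'c' : a' < c := lt_of_le_of_ne ha'c (fun e => hcA (e ▸ ha'A))
  have hb'c' : c < b' := lt_of_le_of_ne hb'c (fun e => hcA (e ▸ hb'A))
  refine ⟨a', b', ⟨ha, ha'A, ?_, har, ?_⟩, ⟨hb'A, hb, ?_, ?_, hbl⟩, by linarith, by linarith,
    by linarith, ?_⟩
  · obtain ⟨y, hy, hay, hyc⟩ := har (c - a) (by linarith)
    exact lt_of_lt_of_le hay (hmax ⟨hy, by simp only [mem_Iic]; linarith⟩)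
  · intro ε hε
    obtain ⟨y, hy, hne, hya⟩ := hp a' ha'A (min ε (c - a')) (lt_min hε (by linarith))
    have h1 := (abs_lt.1 (hya.trans_le (min_le_left _ _))).1
    have h2 := (abs_lt.1 (hya.trans_le (min_le_right _ _))).2
    exact ⟨y, hy, by linarith,
      lt_of_le_of_ne (hmax ⟨hy, by simp only [mem_Iic]; linarith⟩) hne⟩
  · obtain ⟨y, hy, hay, hyc⟩ := hbl (b - c) (by linarith)
    exact lt_of_le_of_lt (hmin ⟨hy, by simp only [mem_Ici]; linarith⟩) hyc
  · intro ε hε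
    obtain ⟨y, hy, hne, hya⟩ := hp b' hb'A (min ε (b' - c)) (lt_min hε (by linarith))
    have h1 := (abs_lt.1 (hya.trans_le (min_le_left _ _))).2
    have h2 := (abs_lt.1 (hya.trans_le (min_le_right _ _))).1
    exact ⟨y, hy, lt_of_le_of_ne (hmin ⟨hy, by simp only [mem_Ici]; linarith⟩) hne.symm,
      by linarith⟩
  · intro y hy _ _
    rcases le_total y c with h | h
    · exact Or.inl (hmax ⟨hy, h⟩)
    · exact Or.inr (hmin ⟨hy, h⟩)

lemma exists_goodPair {A : Set ℝ} (hc : IsCompact A) (hne : A.Nonempty) (hp : NoIsolated A) :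
    ∃ a b, GoodPair A a b ∧ ∀ y ∈ A, a ≤ y ∧ y ≤ b := by
  obtain ⟨a, ha, hamin⟩ := hc.exists_isLeast hne
  obtain ⟨b, hb, hbmax⟩ := hc.exists_isGreatest hne
  refine ⟨a, b, ⟨ha, hb, ?_, ?_, ?_⟩, fun y hy => ⟨hamin hy, hbmax hy⟩⟩
  · obtain ⟨y, hy, hne, -⟩ := hp a ha 1 one_pos
    exact (lt_of_le_of_ne (hamin hy) hne.symm).trans_le (hbmax hy)
  · intro ε hε
    obtain ⟨y, hy, hne, h⟩ := hp a ha ε hε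
    exact ⟨y, hy, lt_of_le_of_ne (hamin hy) hne.symm, by linarith [(abs_lt.1 h).2]⟩
  · intro ε hε
    obtain ⟨y, hy, hne, h⟩ := hp b hb ε hε
    exact ⟨y, hy, by linarith [(abs_lt.1 h).1], lt_of_le_of_ne (hbmax hy) hne⟩

/-- Brouwer's characterization of the Cantor set, for subsets of the line: repeatedly splitting
good pairs codes the points of `A` by binary sequences. -/
theorem isCantorSet_of_perfect {A : Set ℝ} (hc : IsCompact A) (hne : A.Nonempty)
    (hi : interior A = ∅) (hp : NoIsolated A) : IsCantorSet A := by
  obtain ⟨a₀, b₀, h₀, hA₀⟩ := exists_goodPair hc hne hp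
  let G := {p : ℝ × ℝ // GoodPair A p.1 p.2}
  have hsplit : ∀ g : G, ∃ l r : G, l.1.1 = g.1.1 ∧ r.1.2 = g.1.2 ∧ l.1.2 < r.1.1 ∧
      l.1.2 - l.1.1 ≤ 2 / 3 * (g.1.2 - g.1.1) ∧ r.1.2 - r.1.1 ≤ 2 / 3 * (g.1.2 - g.1.1) ∧
      ∀ y ∈ A, g.1.1 ≤ y → y ≤ g.1.2 → y ≤ l.1.2 ∨ r.1.1 ≤ y := by
    rintro ⟨⟨a, b⟩, hg⟩
    obtain ⟨a', b', h1, h2, h3, h4, h5, h6⟩ := GoodPair.split hc hi hp hg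
    exact ⟨⟨(a, a'), h1⟩, ⟨(b', b), h2⟩, rfl, rfl, h3, h4, h5, h6⟩
  choose L R hL hR hLR hLlen hRlen hcov using hsplit
  let step : G → Bool → G := fun g b => if b then R g else L g
  have hlt : ∀ g : G, g.1.1 < g.1.2 := fun g => g.2.2.2.1
  have step_lo : ∀ g b, g.1.1 ≤ (step g b).1.1 := by
    intro g b
    cases b
    · simp [step, hL]
    · have := hLR g; have := hL g; have := hlt (L g)
      simp only [step, if_true]; linarith
  have step_hi : ∀ g b, (step g b).1.2 ≤ g.1.2 := by
    intro g b
    cases b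
    · have := hLR g; have := hR g; have := hlt (R g)
      simp only [step, Bool.false_eq_true, if_false]; linarith
    · simp [step, hR]
  have step_len : ∀ g b, (step g b).1.2 - (step g b).1.1 ≤ 2 / 3 * (g.1.2 - g.1.1) := by
    intro g b
    cases b
    · simpa [step] using hLlen g
    · simpa [step] using hRlen g
  let f : (ℕ → Bool) → ℕ → G := fun s n => Nat.rec ⟨(a₀, b₀), h₀⟩ (fun i g => step g (s i)) n
  have f0 : ∀ s, f s 0 = ⟨(a₀, b₀), h₀⟩ := fun s => rfl
  have fs : ∀ s n, f s (n + 1) = step (f s n) (s n) := fun s n => rfl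
  have flo : ∀ s, Monotone (fun n => (f s n).1.1) := fun s =>
    monotone_nat_of_le_succ fun n => by rw [fs]; exact step_lo _ _
  have fhi : ∀ s, Antitone (fun n => (f s n).1.2) := fun s =>
    antitone_nat_of_succ_le fun n => by rw [fs]; exact step_hi _ _
  have flen : ∀ s n, (f s n).1.2 - (f s n).1.1 ≤ (2 / 3) ^ n * (b₀ - a₀) := by
    intro s n
    induction n with
    | zero => simp [f0]
    | succ n ih =>
      rw [fs, pow_succ]
      refine (step_len _ _).trans ?_
      linarith
  have hpow : Tendsto (fun n : ℕ => (2 / 3 : ℝ) ^ n * (b₀ - a₀)) atTop (𝓝 0) := by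
    simpa using (tendsto_pow_atTop_nhds_zero_of_lt_one (r := (2 / 3 : ℝ)) (by norm_num)
      (by norm_num)).mul_const (b₀ - a₀)
  have cross : ∀ s n k, (f s n).1.1 ≤ (f s k).1.2 := by
    intro s n k
    exact ((flo s (le_max_left n k)).trans (hlt _).le).trans (fhi s (le_max_right n k))
  let φ : (ℕ → Bool) → ℝ := fun s => ⨆ n, (f s n).1.1
  have bdd : ∀ s, BddAbove (range fun n => (f s n).1.1) := fun s =>
    ⟨(f s 0).1.2, by rintro _ ⟨n, rfl⟩; exact cross s n 0⟩
  have φlo : ∀ s n, (f s n).1.1 ≤ φ s := fun s n => le_ciSup (bdd s) n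
  have φhi : ∀ s n, φ s ≤ (f s n).1.2 := fun s n => ciSup_le fun k => cross s k n
  have φA : ∀ s, φ s ∈ A := by
    intro s
    refine hc.isClosed.mem_of_tendsto (tendsto_atTop_ciSup (flo s) (bdd s)) ?_
    exact Eventually.of_forall fun n => (f s n).2.1
  have agree : ∀ s t n, (∀ i < n, s i = t i) → f s n = f t n := by
    intro s t n
    induction n with
    | zero => intro _; rfl
    | succ n ih =>
      intro h
      rw [fs, fs, ih fun i hi => h i (by omega), h n (by omega)]
  have φcont : Continuous φ := by
    rw [continuous_iff_continuousAt]
    intro s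
    rw [ContinuousAt, Metric.tendsto_nhds]
    intro ε hε
    obtain ⟨n, hn⟩ := (hpow.eventually (gt_mem_nhds hε)).exists
    have hev : ∀ᶠ t in 𝓝 s, ∀ i ∈ Finset.range n, t i = s i := by
      rw [Filter.eventually_all_finset]
      intro i _
      have : Tendsto (fun t : ℕ → Bool => t i) (𝓝 s) (𝓝 (s i)) := (continuous_apply i).tendsto s
      rw [nhds_discrete Bool] at this
      exact tendsto_pure.1 this
    filter_upwards [hev] with t ht
    have e := agree t s n fun i hi => ht i (Finset.mem_range.2 hi)
    have h1 := φlo t n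
    have h2 := φhi t n
    rw [e] at h1 h2
    have h3 := φlo s n
    have h4 := φhi s n
    have h5 := flen s n
    rw [Real.dist_eq, abs_lt]
    constructor <;> linarith
  have key : ∀ s t n, (∀ i < n, s i = t i) → s n = false → t n = true → φ s < φ t := by
    intro s t n h hs ht
    have h1 := φhi s (n + 1)
    have h2 := φlo t (n + 1)
    rw [fs, hs] at h1
    rw [fs, ht, ← agree s t n h] at h2
    have := hLR (f s n)
    simp only [step, Bool.false_eq_true, if_false, if_true] at h1 h2
    linarith
  have φinj : Function.Injective φ := by
    intro s t hst
    by_contra hne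
    have hex : ∃ n, s n ≠ t n := by
      by_contra! hcon
      exact hne (funext hcon)
    classical
    have hn := Nat.find_spec hex
    have hlt' : ∀ i < Nat.find hex, s i = t i := fun i hi => by
      simpa using Nat.find_min hex hi
    cases hs : s (Nat.find hex) <;> cases ht : t (Nat.find hex)
    · exact hn (hs.trans ht.symm)
    · exact (key s t _ hlt' hs ht).ne hst
    · exact (key t s _ (fun i hi => (hlt' i hi).symm) ht hs).ne hst.symm
    · exact hn (hs.trans ht.symm)
  have φsurj : ∀ y ∈ A, ∃ s, φ s = y := by
    intro y hy
    classical
    let bit : G → Bool := fun g => decide (¬ y ≤ (L g).1.2)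
    let h : ℕ → G := fun n => Nat.rec ⟨(a₀, b₀), h₀⟩ (fun _ g => step g (bit g)) n
    have hs : ∀ n, h (n + 1) = step (h n) (bit (h n)) := fun n => rfl
    let s : ℕ → Bool := fun n => bit (h n)
    have hf : ∀ n, f s n = h n := by
      intro n
      induction n with
      | zero => rfl
      | succ n ih => rw [fs, hs, ih]
    have hin : ∀ n, (h n).1.1 ≤ y ∧ y ≤ (h n).1.2 := by
      intro n
      induction n with
      | zero => exact hA₀ y hy
      | succ n ih =>
        rw [hs]
        by_cases hyL : y ≤ (L (h n)).1.2
        · have : bit (h n) = false := by simp [bit, hyL]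
          rw [this]
          simp only [step, Bool.false_eq_true, if_false]
          exact ⟨(hL (h n)).le.trans ih.1, hyL⟩
        · have : bit (h n) = true := decide_eq_true hyL
          rw [this]
          simp only [step, if_true]
          exact ⟨(hcov (h n) y hy ih.1 ih.2).resolve_left hyL, ih.2.trans (hR (h n)).ge⟩
    refine ⟨s, ?_⟩
    have hle : ∀ n, |φ s - y| ≤ (2 / 3) ^ n * (b₀ - a₀) := by
      intro n
      have h1 := φlo s n
      have h2 := φhi s n
      have h3 := flen s n
      have h4 := hin n
      rw [← hf] at h4
      rw [abs_le]
      constructor <;> linarith [h4.1, h4.2]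
    have := ge_of_tendsto' hpow hle
    have := abs_nonpos_iff.1 this
    linarith
  let e : (ℕ → Bool) ≃ A := Equiv.ofBijective (fun s => ⟨φ s, φA s⟩)
    ⟨fun s t h => φinj (congrArg Subtype.val h), fun y => by
      obtain ⟨s, hs⟩ := φsurj y y.2
      exact ⟨s, Subtype.ext hs⟩⟩
  have he : Continuous e := φcont.subtype_mk φA
  exact ⟨he.homeoOfEquivCompactToT2.symm.trans cantorSetHomeomorphNatToBool.symm⟩

/-! ### The sets `{∑ cₙ xₙ : 0 ≤ cₙ ≤ k}` -/

/-- The set of all sums `∑ c n * x n` with integer digits `0 ≤ c n ≤ k`. For `k ≥ 1` this is the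
`k`-fold sumset of the set of subsums of `x`. -/
def digitSums (x : ℕ → ℝ) (k : ℕ) : Set ℝ :=
  {y | ∃ c : ℕ → ℕ, (∀ n, c n ≤ k) ∧ HasSum (fun n => (c n : ℝ) * x n) y}

lemma summable_digits {x : ℕ → ℝ} (hx : ∀ n, 0 < x n) (hs : Summable x)
    {k : ℕ} {c : ℕ → ℕ} (hc : ∀ n, c n ≤ k) :
    Summable (fun n => (c n : ℝ) * x n) := by
  refine Summable.of_nonneg_of_le (fun n => by have := (hx n).le; positivity) (fun n => ?_)
    (hs.mul_left (k : ℝ))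
  exact mul_le_mul_of_nonneg_right (by exact_mod_cast hc n) (hx n).le

lemma digits_nonneg {x : ℕ → ℝ} (hx : ∀ n, 0 < x n) (c : ℕ → ℕ) (n : ℕ) : 0 ≤ (c n : ℝ) * x n :=
  mul_nonneg (Nat.cast_nonneg _) (hx n).le

lemma mem_digitSums {x : ℕ → ℝ} (hx : ∀ n, 0 < x n) (hs : Summable x)
    {k : ℕ} {c : ℕ → ℕ} (hc : ∀ n, c n ≤ k) :
    (∑' n, (c n : ℝ) * x n) ∈ digitSums x k :=
  ⟨c, hc, (summable_digits hx hs hc).hasSum⟩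

lemma digitSums_mono {x : ℕ → ℝ} {k l : ℕ} (h : k ≤ l) : digitSums x k ⊆ digitSums x l := by
  rintro y ⟨c, hc, hy⟩
  exact ⟨c, fun n => (hc n).trans h, hy⟩

lemma zero_mem_digitSums {x : ℕ → ℝ} (k : ℕ) : (0 : ℝ) ∈ digitSums x k :=
  ⟨fun _ => 0, fun _ => Nat.zero_le _, by simp⟩

lemma total_mem_digitSums {x : ℕ → ℝ} (hs : Summable x)
    (k : ℕ) : (k : ℝ) * ∑' n, x n ∈ digitSums x k :=
  ⟨fun _ => k, fun _ => le_rfl, hs.hasSum.mul_left _⟩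

lemma reflect_digitSums {x : ℕ → ℝ} (hs : Summable x) {k : ℕ} {y : ℝ} (hy : y ∈ digitSums x k) :
    (k : ℝ) * ∑' n, x n - y ∈ digitSums x k := by
  obtain ⟨c, hc, hy⟩ := hy
  refine ⟨fun n => k - c n, fun n => Nat.sub_le _ _, ?_⟩
  convert! (hs.hasSum.mul_left (k : ℝ)).sub hy using 2 with n
  rw [Nat.cast_sub (hc n)]
  ring

lemma isCompact_digitSums {x : ℕ → ℝ} (hx : ∀ n, 0 < x n) (hs : Summable x)
    (k : ℕ) : IsCompact (digitSums x k) := by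
  have h : digitSums x k = range fun c : ℕ → Fin (k + 1) => ∑' n, ((c n : ℕ) : ℝ) * x n := by
    ext y
    constructor
    · rintro ⟨c, hc, hy⟩
      exact ⟨fun n => ⟨c n, Nat.lt_succ_of_le (hc n)⟩, hy.tsum_eq⟩
    · rintro ⟨c, rfl⟩
      exact mem_digitSums hx hs (c := fun n => (c n : ℕ)) fun n => Nat.le_of_lt_succ (c n).2
  rw [h]
  refine isCompact_range (continuous_tsum (u := fun n => (k : ℝ) * x n) (fun n => ?_)
    (hs.mul_left _) fun n c => ?_)
  · exact ((continuous_of_discreteTopology (f := fun i : Fin (k + 1) => ((i : ℕ) : ℝ))).comp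
      (continuous_apply n)).mul continuous_const
  · rw [Real.norm_of_nonneg (by have := (hx n).le; positivity)]
    exact mul_le_mul_of_nonneg_right (by exact_mod_cast Nat.le_of_lt_succ (c n).2) (hx n).le

/-- Changing one far-out digit by one moves a point by an arbitrarily small nonzero amount. -/
lemma noIsolated_digitSums {x : ℕ → ℝ} (hx : ∀ n, 0 < x n) (hs : Summable x)
    {k : ℕ} (hk : 1 ≤ k) : NoIsolated (digitSums x k) := by
  rintro y ⟨c, hc, hy⟩ ε hε
  obtain ⟨n, hn⟩ := (hs.tendsto_atTop_zero.eventually (gt_mem_nhds hε)).exists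
  rcases Nat.eq_zero_or_pos (c n) with h0 | h0
  · refine ⟨y + x n, ⟨Function.update c n 1, fun i => ?_, ?_⟩, ?_, ?_⟩
    · by_cases hi : i = n
      · subst hi; simpa using hk
      · simpa [hi] using hc i
    · convert! hy.add (hasSum_ite_eq n (x n)) using 2 with i
      by_cases hi : i = n
      · subst hi; simp [h0]
      · simp [hi]
    · linarith [hx n]
    · rw [add_sub_cancel_left, abs_of_pos (hx n)]; exact hn
  · refine ⟨y - x n, ⟨Function.update c n (c n - 1), fun i => ?_, ?_⟩, ?_, ?_⟩
    · by_cases hi : i = n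
      · subst hi; have := hc i; simp; omega
      · simpa [hi] using hc i
    · convert! hy.sub (hasSum_ite_eq n (x n)) using 2 with i
      by_cases hi : i = n
      · subst hi; simp [Nat.cast_sub (show 1 ≤ c i from h0)]; ring
      · simp [hi]
    · linarith [hx n]
    · rw [sub_sub_cancel_left, abs_neg, abs_of_pos (hx n)]; exact hn

lemma iterSumSet_zero_eq {x : ℕ → ℝ} : iterSumSet (digitSums x 1) 0 = digitSums x 0 := by
  ext y
  simp only [iterSumSet, mem_singleton_iff]
  constructor
  · rintro rfl; exact zero_mem_digitSums 0
  · rintro ⟨c, hc, hy⟩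
    have : ∀ n, c n = 0 := fun n => Nat.le_zero.1 (hc n)
    simp only [this, Nat.cast_zero, zero_mul] at hy
    exact hy.unique hasSum_zero

lemma iterSumSet_digitSums {x : ℕ → ℝ} (hx : ∀ n, 0 < x n) (hs : Summable x)
    (k : ℕ) : iterSumSet (digitSums x 1) k = digitSums x k := by
  induction k with
  | zero => exact iterSumSet_zero_eq
  | succ k ih =>
    rw [iterSumSet, ih]
    ext y
    rw [Set.mem_add]
    constructor
    · rintro ⟨u, ⟨c, hc, hu⟩, v, ⟨d, hd, hv⟩, rfl⟩
      refine ⟨fun n => c n + d n, fun n => add_le_add (hc n) (hd n), ?_⟩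
      convert! hu.add hv using 2 with n
      push_cast; ring
    · rintro ⟨c, hc, hy⟩
      have h1 : ∀ n, min (c n) k ≤ k := fun n => min_le_right _ _
      have h2 : ∀ n, c n - k ≤ 1 := fun n => by have := hc n; omega
      refine ⟨_, mem_digitSums hx hs h1, _, mem_digitSums hx hs h2, ?_⟩
      rw [← (summable_digits hx hs h1).tsum_add (summable_digits hx hs h2), ← hy.tsum_eq]
      congr 1; ext n
      rw [← add_mul, ← Nat.cast_add]
      congr 2; omega

lemma achievementSet_shift {x : ℕ → ℝ} :
    achievementSet (fun n => x (n - 1)) = digitSums x 1 := by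
  classical
  ext y
  constructor
  · rintro ⟨A, hA, hy⟩
    refine ⟨fun n => if n + 1 ∈ A then 1 else 0, fun n => by dsimp only; split_ifs <;> simp, ?_⟩
    replace hy := (hasSum_subtype_iff_indicator (f := fun n => x (n - 1)) (s := A)).1 hy
    rw [← hasSum_nat_add_iff' 1] at hy
    have h0 : (0 : ℕ) ∉ A := fun h => by simpa using hA h
    simp only [Finset.range_one, Finset.sum_singleton, Set.indicator_of_notMem h0, sub_zero] at hy
    convert! hy using 2 with n
    by_cases h : n + 1 ∈ A <;> simp [h]
  · rintro ⟨c, hc, hy⟩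
    refine ⟨{n | 1 ≤ n ∧ c (n - 1) = 1}, fun n hn => hn.1, ?_⟩
    refine (hasSum_subtype_iff_indicator (f := fun n => x (n - 1))).2 ?_
    rw [← hasSum_nat_add_iff' 1]
    simp only [Finset.range_one, Finset.sum_singleton]
    rw [Set.indicator_of_notMem (by simp), sub_zero]
    convert! hy using 2 with n
    have := hc n
    have h : c n = 0 ∨ c n = 1 := by omega
    rcases h with h | h <;> simp [Set.indicator, h]

/-! ### Interval criterion and measure-zero criterion -/

lemma tail_succ {x : ℕ → ℝ} (hs : Summable x) (n : ℕ) :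
    ∑' i, x (i + n) = x n + ∑' i, x (i + (n + 1)) := by
  have h := ((summable_nat_add_iff n).2 hs).tsum_eq_zero_add
  rw [h, zero_add]
  congr 1
  refine tsum_congr fun i => ?_
  congr 1; omega

/-- Kakeya's criterion with digits up to `k`: if no term exceeds `k` times the following remainder,
the greedy algorithm represents every point between the extreme sums. -/
lemma digitSums_eq_Icc {x : ℕ → ℝ} (hx : ∀ n, 0 < x n) (hs : Summable x) {k : ℕ}
    (hK : ∀ n, x n ≤ k * ∑' i, x (i + (n + 1))) :
    digitSums x k = Icc 0 (k * ∑' n, x n) := by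
  refine Subset.antisymm ?_ ?_
  · rintro y ⟨c, hc, hy⟩
    refine ⟨hy.nonneg fun n => digits_nonneg hx c n, ?_⟩
    exact hasSum_le (fun n => mul_le_mul_of_nonneg_right (by exact_mod_cast hc n) (hx n).le) hy
      (hs.hasSum.mul_left _)
  · rintro y ⟨hy0, hyk⟩
    let d : ℝ → ℕ → ℕ := fun z n => min k ⌊z / x n⌋₊
    let z : ℕ → ℝ := fun n => Nat.rec y (fun i w => w - d w i * x i) n
    have zs : ∀ n, z (n + 1) = z n - d (z n) n * x n := fun n => rfl
    have inv : ∀ n, 0 ≤ z n ∧ z n ≤ k * ∑' i, x (i + n) := by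
      intro n
      induction n with
      | zero => exact ⟨hy0, hyk⟩
      | succ n ih =>
        rw [zs]
        have hfl : (⌊z n / x n⌋₊ : ℝ) * x n ≤ z n := by
          rw [← le_div_iff₀ (hx n)]
          exact Nat.floor_le (div_nonneg ih.1 (hx n).le)
        have hfl2 : z n < (⌊z n / x n⌋₊ + 1 : ℝ) * x n := by
          rw [← div_lt_iff₀ (hx n)]
          exact Nat.lt_floor_add_one _
        rcases le_total k ⌊z n / x n⌋₊ with h | h
        · have hd : d (z n) n = k := min_eq_left h
          rw [hd]
          have h' : (k : ℝ) * x n ≤ ⌊z n / x n⌋₊ * x n :=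
            mul_le_mul_of_nonneg_right (by exact_mod_cast h) (hx n).le
          have h2 := ih.2
          rw [tail_succ hs n] at h2
          constructor <;> linarith
        · have hd : d (z n) n = ⌊z n / x n⌋₊ := min_eq_right h
          rw [hd]
          have := hK n
          constructor <;> linarith
    refine ⟨fun n => d (z n) n, fun n => min_le_left _ _, ?_⟩
    rw [hasSum_iff_tendsto_nat_of_nonneg fun n => digits_nonneg hx (fun n => d (z n) n) n]
    have hsum : ∀ n, ∑ i ∈ Finset.range n, (d (z i) i : ℝ) * x i = y - z n := by
      intro n
      induction n with
      | zero => simp [z]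
      | succ n ih => rw [Finset.sum_range_succ, ih, zs]; ring
    simp only [hsum]
    have hz : Tendsto z atTop (𝓝 0) := by
      refine squeeze_zero (fun n => (inv n).1) (fun n => (inv n).2) ?_
      simpa using (tendsto_sum_nat_add x).const_mul (k : ℝ)
    simpa using hz.const_sub y

/-- If finitely many digits determine a point up to an error that is small compared with the number
of their values, the set of digit sums is null and so has empty interior. -/
lemma interior_digitSums_eq_empty {x : ℕ → ℝ} (hx : ∀ n, 0 < x n) {k : ℕ}
    (h : ∀ ε > 0, ∃ F : Finset ℕ, ∃ η : ℝ,
      HasSum (fun n => if n ∈ F then 0 else x n) η ∧ (k + 1 : ℝ) ^ F.card * (k * η) < ε) :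
    interior (digitSums x k) = ∅ := by
  have hvol : volume (digitSums x k) = 0 := by
    refine le_antisymm (ENNReal.le_of_forall_pos_le_add fun ε hε _ => ?_) zero_le
    obtain ⟨F, η, hη, hlt⟩ := h ε hε
    have hη0 : 0 ≤ η := hη.nonneg fun n => by
      split_ifs
      · exact le_rfl
      · exact (hx n).le
    let w : (F → Fin (k + 1)) → ℝ := fun g => ∑ n : F, ((g n : ℕ) : ℝ) * x n
    have hcov : digitSums x k ⊆
        ⋃ g ∈ (Finset.univ : Finset (F → Fin (k + 1))), Icc (w g) (w g + k * η) := by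
      rintro y ⟨c, hc, hy⟩
      refine mem_iUnion₂.2 ⟨fun n => ⟨c n, Nat.lt_succ_of_le (hc n)⟩, Finset.mem_univ _, ?_⟩
      have hw : w (fun n => ⟨c n, Nat.lt_succ_of_le (hc n)⟩) = ∑ n ∈ F, (c n : ℝ) * x n :=
        Finset.sum_coe_sort F fun n => (c n : ℝ) * x n
      rw [hw]
      have h1 : HasSum (fun n => if n ∈ F then (c n : ℝ) * x n else 0)
          (∑ n ∈ F, (c n : ℝ) * x n) := by
        have := hasSum_sum_of_ne_finset_zero (L := SummationFilter.unconditional ℕ)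
          (f := fun n => if n ∈ F then (c n : ℝ) * x n else 0)
          (s := F) fun n hn => if_neg hn
        rwa [Finset.sum_congr rfl fun n hn => if_pos hn] at this
      refine ⟨hasSum_le (fun n => ?_) h1 hy, hasSum_le (fun n => ?_) hy (h1.add (hη.mul_left _))⟩
      · split_ifs
        · exact le_rfl
        · exact digits_nonneg hx c n
      · split_ifs
        · simp
        · rw [zero_add]
          exact mul_le_mul_of_nonneg_right (by exact_mod_cast hc n) (hx n).le
    calc volume (digitSums x k)
        ≤ volume (⋃ g ∈ (Finset.univ : Finset (F → Fin (k + 1))), Icc (w g) (w g + k * η)) :=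
          measure_mono hcov
      _ ≤ ∑ g : F → Fin (k + 1), volume (Icc (w g) (w g + k * η)) :=
          measure_biUnion_finset_le _ _
      _ = ((k + 1) ^ F.card : ℕ) * ENNReal.ofReal (k * η) := by simp [Real.volume_Icc]
      _ = ENNReal.ofReal ((k + 1 : ℝ) ^ F.card * (k * η)) := by
        rw [ENNReal.ofReal_mul (p := (k + 1 : ℝ) ^ F.card) (by positivity),
          ← ENNReal.ofReal_natCast]
        push_cast
        rfl
      _ ≤ ENNReal.ofReal (ε : ℝ) := ENNReal.ofReal_le_ofReal hlt.le
      _ = 0 + ε := by simp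
  by_contra hne
  exact (isOpen_interior.measure_pos volume (nonempty_iff_ne_empty.2 hne)).ne'
    (measure_mono_null interior_subset hvol)

lemma isCantorSet_digitSums {x : ℕ → ℝ} (hx : ∀ n, 0 < x n) (hs : Summable x) {k : ℕ}
    (hk : 1 ≤ k) (h : ∀ ε > 0, ∃ F : Finset ℕ, ∃ η : ℝ,
      HasSum (fun n => if n ∈ F then 0 else x n) η ∧ (k + 1 : ℝ) ^ F.card * (k * η) < ε) :
    IsCantorSet (digitSums x k) :=
  isCantorSet_of_perfect (isCompact_digitSums hx hs k) ⟨0, zero_mem_digitSums k⟩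
    (interior_digitSums_eq_empty hx h) (noIsolated_digitSums hx hs hk)

/-! ### Cantorval criterion -/

lemma gap_eq_Ioo {S G : Set ℝ} (hc : IsCompact S) (hG : G ∈ gaps S) :
    ∃ α β, α ∈ S ∧ β ∈ S ∧ α < β ∧ G = Ioo α β := by
  obtain ⟨⟨x, hx, rfl⟩, hb⟩ := hG
  have hxG : x ∈ connectedComponentIn Sᶜ x := mem_connectedComponentIn hx
  have hsub : connectedComponentIn Sᶜ x ⊆ Sᶜ := connectedComponentIn_subset _ _
  have hord : OrdConnected (connectedComponentIn Sᶜ x) :=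
    isPreconnected_connectedComponentIn.ordConnected
  have h1 : (S ∩ Iic x).Nonempty := by
    by_contra hne
    have : Iic x ⊆ connectedComponentIn Sᶜ x :=
      isPreconnected_Iic.subset_connectedComponentIn self_mem_Iic
        fun y hy hyS => hne ⟨y, hyS, hy⟩
    exact not_bddBelow_Iic x (hb.subset this).bddBelow
  have h2 : (S ∩ Ici x).Nonempty := by
    by_contra hne
    have : Ici x ⊆ connectedComponentIn Sᶜ x :=
      isPreconnected_Ici.subset_connectedComponentIn self_mem_Ici
        fun y hy hyS => hne ⟨y, hyS, hy⟩
    exact not_bddAbove_Ici x (hb.subset this).bddAbove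
  obtain ⟨α, ⟨hαS, hαx⟩, hα⟩ := (hc.inter_right isClosed_Iic).exists_isGreatest h1
  obtain ⟨β, ⟨hβS, hβx⟩, hβ⟩ := (hc.inter_right isClosed_Ici).exists_isLeast h2
  have hαx' : α < x := lt_of_le_of_ne hαx fun e => hx (e ▸ hαS)
  have hβx' : x < β := lt_of_le_of_ne hβx fun e => hx (e ▸ hβS)
  refine ⟨α, β, hαS, hβS, hαx'.trans hβx', Subset.antisymm ?_ ?_⟩
  · intro y hy
    refine ⟨lt_of_not_ge fun h => ?_, lt_of_not_ge fun h => ?_⟩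
    · exact hsub (hord.out hy hxG ⟨h, hαx⟩) hαS
    · exact hsub (hord.out hxG hy ⟨hβx, h⟩) hβS
  · refine isPreconnected_Ioo.subset_connectedComponentIn ⟨hαx', hβx'⟩ fun y hy hyS => ?_
    rcases le_total y x with h | h
    · exact absurd (hα ⟨hyS, h⟩) (not_le.2 hy.1)
    · exact absurd (hβ ⟨hyS, h⟩) (not_le.2 hy.2)

lemma component_mem_gaps {S : Set ℝ} {s t z : ℝ} (hs : s ∈ S) (ht : t ∈ S) (hz : z ∉ S)
    (hsz : s < z) (hzt : z < t) : connectedComponentIn Sᶜ z ∈ gaps S := by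
  refine ⟨⟨z, hz, rfl⟩, (Metric.isBounded_Icc s t).subset fun y hy => ?_⟩
  have hzG : z ∈ connectedComponentIn Sᶜ z := mem_connectedComponentIn hz
  have hsub : connectedComponentIn Sᶜ z ⊆ Sᶜ := connectedComponentIn_subset _ _
  have hord : OrdConnected (connectedComponentIn Sᶜ z) :=
    isPreconnected_connectedComponentIn.ordConnected
  refine ⟨le_of_not_gt fun h => ?_, le_of_not_gt fun h => ?_⟩
  · exact hsub (hord.out hy hzG ⟨h.le, hsz.le⟩) hs
  · exact hsub (hord.out hzG hy ⟨hzt.le, h.le⟩) ht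

lemma component_mem_intervalComponents {S : Set ℝ} {u v : ℝ} (huv : u < v) (h : Icc u v ⊆ S) :
    connectedComponentIn S u ∈ intervalComponents S ∧ u ∈ connectedComponentIn S u := by
  have hu : u ∈ S := h (left_mem_Icc.2 huv.le)
  have hsub : Icc u v ⊆ connectedComponentIn S u :=
    isPreconnected_Icc.subset_connectedComponentIn (left_mem_Icc.2 huv.le) h
  refine ⟨⟨⟨u, hu, rfl⟩, fun hss => ?_⟩, mem_connectedComponentIn hu⟩
  exact huv.ne (hss (hsub (left_mem_Icc.2 huv.le)) (hsub (right_mem_Icc.2 huv.le)))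

/-- A reformulation of the definition of a Cantorval in which only points and intervals occur. -/
lemma isCantorval_of_gap_endpoints {S : Set ℝ} (hc : IsCompact S) {s t z u v : ℝ} (hs : s ∈ S)
    (ht : t ∈ S) (hz : z ∉ S) (hsz : s < z) (hzt : z < t) (huv : u < v) (hI : Icc u v ⊆ S)
    (hright : ∀ α β, α ∈ S → β ∈ S → α < β → Ioo α β ⊆ Sᶜ → ∀ ε > 0,
      (∃ z ∈ Ioo β (β + ε), z ∉ S ∧ ∃ t ∈ S, z < t) ∧
      ∃ u v, u < v ∧ Icc u v ⊆ S ∧ u ∈ Ioo β (β + ε))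
    (hleft : ∀ α β, α ∈ S → β ∈ S → α < β → Ioo α β ⊆ Sᶜ → ∀ ε > 0,
      (∃ z ∈ Ioo (α - ε) α, z ∉ S ∧ ∃ t ∈ S, t < z) ∧
      ∃ u v, u < v ∧ Icc u v ⊆ S ∧ u ∈ Ioo (α - ε) α) :
    IsCantorval S := by
  refine ⟨⟨s, hs⟩, hc, ⟨_, component_mem_gaps hs ht hz hsz hzt⟩,
    ⟨_, (component_mem_intervalComponents huv hI).1⟩, ?_⟩
  intro G hG p hp
  obtain ⟨α, β, hα, hβ, hαβ, rfl⟩ := gap_eq_Ioo hc hG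
  have hsub : Ioo α β ⊆ Sᶜ := by
    obtain ⟨⟨x, hx, h⟩, -⟩ := hG
    rw [h]; exact connectedComponentIn_subset _ _
  rw [csInf_Ioo hαβ, csSup_Ioo hαβ] at hp
  rcases hp with rfl | hp
  · refine ⟨fun ε hε => ?_, fun ε hε => ?_⟩
    · obtain ⟨⟨z, hz, hzS, t, ht, htz⟩, -⟩ := hleft _ _ hα hβ hαβ hsub ε hε
      refine ⟨_, component_mem_gaps ht hα hzS htz hz.2, fun h => ?_, z,
        mem_connectedComponentIn hzS, ?_⟩
      · exact absurd (h ▸ mem_connectedComponentIn hzS : z ∈ Ioo p β).1 (not_lt.2 hz.2.le)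
      · rw [Metric.mem_ball, Real.dist_eq, abs_lt]
        constructor <;> linarith [hz.1, hz.2]
    · obtain ⟨-, u, v, huv, hI, hu⟩ := hleft _ _ hα hβ hαβ hsub ε hε
      obtain ⟨h1, h2⟩ := component_mem_intervalComponents huv hI
      refine ⟨_, h1, u, h2, ?_, hu.2.ne⟩
      rw [Metric.mem_ball, Real.dist_eq, abs_lt]
      constructor <;> linarith [hu.1, hu.2]
  · rw [mem_singleton_iff] at hp
    subst hp
    refine ⟨fun ε hε => ?_, fun ε hε => ?_⟩
    · obtain ⟨⟨z, hz, hzS, t, ht, htz⟩, -⟩ := hright _ _ hα hβ hαβ hsub ε hε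
      refine ⟨_, component_mem_gaps hβ ht hzS hz.1 htz, fun h => ?_, z,
        mem_connectedComponentIn hzS, ?_⟩
      · exact absurd (h ▸ mem_connectedComponentIn hzS : z ∈ Ioo α p).2 (not_lt.2 hz.1.le)
      · rw [Metric.mem_ball, Real.dist_eq, abs_lt]
        constructor <;> linarith [hz.1, hz.2]
    · obtain ⟨-, u, v, huv, hI, hu⟩ := hright _ _ hα hβ hαβ hsub ε hε
      obtain ⟨h1, h2⟩ := component_mem_intervalComponents huv hI
      refine ⟨_, h1, u, h2, ?_, hu.1.ne'⟩
      rw [Metric.mem_ball, Real.dist_eq, abs_lt]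
      constructor <;> linarith [hu.1, hu.2]

/-- The right endpoint of a gap of the set of digit sums has only finitely many nonzero digits,
since otherwise lowering far-out digits would approach it from inside the gap. -/
lemma digits_eventually_zero {x : ℕ → ℝ} (hx : ∀ n, 0 < x n) (hs : Summable x) {k : ℕ} {α β : ℝ}
    (hαβ : α < β) (hgap : Ioo α β ⊆ (digitSums x k)ᶜ) {c : ℕ → ℕ} (hc : ∀ n, c n ≤ k)
    (hβ : HasSum (fun n => (c n : ℝ) * x n) β) : ∃ N, ∀ n ≥ N, c n = 0 := by
  have hev := hs.tendsto_atTop_zero.eventually (gt_mem_nhds (sub_pos.2 hαβ))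
  obtain ⟨N, hN⟩ := eventually_atTop.1 hev
  refine ⟨N, fun n hn => ?_⟩
  by_contra h0
  have hxn := hN n hn
  refine hgap (show β - x n ∈ Ioo α β from ⟨by linarith, by linarith [hx n]⟩) ?_
  refine ⟨Function.update c n (c n - 1), fun i => ?_, ?_⟩
  · by_cases hi : i = n
    · subst hi; have := hc i; simp; omega
    · simpa [hi] using hc i
  · convert! hβ.sub (hasSum_ite_eq n (x n)) using 2 with i
    by_cases hi : i = n
    · subst hi; simp [Nat.cast_sub (show 1 ≤ c i from Nat.pos_of_ne_zero h0)]; ring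
    · simp [hi]

/-- To the right of a right gap endpoint `β`, the set of digit sums looks like a translate of its
part near `0`. -/
lemma local_translate {x : ℕ → ℝ} (hx : ∀ n, 0 < x n) (hs : Summable x) {k : ℕ} {α β : ℝ}
    (hβ : β ∈ digitSums x k) (hαβ : α < β) (hgap : Ioo α β ⊆ (digitSums x k)ᶜ) :
    ∃ δ > 0, ∀ y, 0 < y → y < δ → (β + y ∈ digitSums x k ↔ y ∈ digitSums x k) := by
  obtain ⟨c, hc, hcβ⟩ := hβ
  obtain ⟨N₀, hN₀⟩ := digits_eventually_zero hx hs hαβ hgap hc hcβ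
  have htail : Tendsto (fun n => (k : ℝ) * ∑' i, x (i + n)) atTop (𝓝 0) := by
    simpa using (tendsto_sum_nat_add x).const_mul (k : ℝ)
  obtain ⟨N, hN, hNN⟩ := ((htail.eventually (gt_mem_nhds (sub_pos.2 hαβ))).and
    (eventually_ge_atTop N₀)).exists
  have hcN : ∀ n ≥ N, c n = 0 := fun n hn => hN₀ n (hNN.trans hn)
  -- `δ` is at most every `x i` with `i < N` and every distance from `β` to a larger `N`-digit sum.
  have hδ₁ : ∃ δ > 0, ∀ i < N, δ ≤ x i := by
    have h : ∀ᶠ δ in 𝓝[>] (0 : ℝ), ∀ i ∈ Finset.range N, δ ≤ x i := by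
      rw [Filter.eventually_all_finset]
      intro i _
      exact nhdsWithin_le_nhds (eventually_le_nhds (hx i))
    obtain ⟨δ, h1, h2⟩ := (h.and self_mem_nhdsWithin).exists
    exact ⟨δ, h2, fun i hi => h1 i (Finset.mem_range.2 hi)⟩
  have hδ₂ : ∃ δ > 0, ∀ d : ℕ → ℕ, (∀ n, d n ≤ k) →
      β < ∑ i ∈ Finset.range N, (d i : ℝ) * x i →
      β + δ ≤ ∑ i ∈ Finset.range N, (d i : ℝ) * x i := by
    let w : (Fin N → Fin (k + 1)) → ℝ := fun g => ∑ i, ((g i : ℕ) : ℝ) * x i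
    have h : ∀ᶠ δ in 𝓝[>] (0 : ℝ), ∀ g ∈ (Finset.univ : Finset (Fin N → Fin (k + 1))),
        β < w g → β + δ ≤ w g := by
      rw [Filter.eventually_all_finset]
      intro g _
      by_cases hg : β < w g
      · filter_upwards [nhdsWithin_le_nhds (eventually_le_nhds (sub_pos.2 hg))] with δ h _
        linarith
      · exact Eventually.of_forall fun δ h => absurd h hg
    obtain ⟨δ, h1, h2⟩ := (h.and self_mem_nhdsWithin).exists
    refine ⟨δ, h2, fun d hd hlt => ?_⟩
    rw [Finset.sum_range] at hlt ⊢
    exact h1 (fun i => ⟨d i, Nat.lt_succ_of_le (hd i)⟩) (Finset.mem_univ _) hlt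
  obtain ⟨δ₁, hδ₁0, hδ₁⟩ := hδ₁
  obtain ⟨δ₂, hδ₂0, hδ₂⟩ := hδ₂
  refine ⟨min δ₁ δ₂, lt_min hδ₁0 hδ₂0, fun y hy0 hy => ⟨?_, ?_⟩⟩
  · rintro ⟨d, hd, hdy⟩
    set f := ∑ i ∈ Finset.range N, (d i : ℝ) * x i with hf
    have hsplit := (hasSum_nat_add_iff' N).2 hdy
    rw [← hf] at hsplit
    have hfS : f ∈ digitSums x k := by
      refine ⟨fun n => if n < N then d n else 0, fun n => ?_, ?_⟩
      · dsimp only; split_ifs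
        · exact hd n
        · exact Nat.zero_le _
      · have := hasSum_sum_of_ne_finset_zero (L := SummationFilter.unconditional ℕ)
          (f := fun n => ((if n < N then d n else 0 : ℕ) : ℝ) * x n) (s := Finset.range N)
          fun n hn => by simp [Finset.mem_range.not.1 hn]
        rwa [Finset.sum_congr rfl fun n hn => by rw [if_pos (Finset.mem_range.1 hn)]] at this
    have ht : β + y - f ≤ k * ∑' i, x (i + N) :=
      hasSum_le (fun n => mul_le_mul_of_nonneg_right (by exact_mod_cast hd _) (hx _).le) hsplit
        (((summable_nat_add_iff N).2 hs).hasSum.mul_left _)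
    have ht0 : 0 ≤ β + y - f := hsplit.nonneg fun n => digits_nonneg hx d _
    have hfβ : f = β := by
      rcases lt_trichotomy f β with h | h | h
      · exfalso
        refine hgap ⟨?_, h⟩ hfS
        linarith
      · exact h
      · have := hδ₂ d hd h
        have := hy.trans_le (min_le_right _ _)
        linarith
    rw [hfβ, add_sub_cancel_left] at hsplit
    refine ⟨fun n => if n < N then 0 else d n, fun n => ?_, ?_⟩
    · dsimp only; split_ifs
      · exact Nat.zero_le _
      · exact hd n
    · rw [← hasSum_nat_add_iff' N, Finset.sum_eq_zero fun n hn => by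
        simp [Finset.mem_range.1 hn], sub_zero]
      convert! hsplit using 2 with n
      simp
  · rintro ⟨d, hd, hdy⟩
    have hd0 : ∀ i < N, d i = 0 := by
      intro i hi
      by_contra h0
      have h1 : (d i : ℝ) * x i ≤ y := le_hasSum hdy i fun j _ => digits_nonneg hx d j
      have h2 : (1 : ℝ) ≤ d i := by exact_mod_cast Nat.pos_of_ne_zero h0
      have h3 := le_mul_of_one_le_left (hx i).le h2
      have := hδ₁ i hi
      have := hy.trans_le (min_le_left _ _)
      linarith
    refine ⟨fun n => c n + d n, fun n => ?_, ?_⟩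
    · rcases lt_or_ge n N with h | h
      · simpa [hd0 n h] using hc n
      · simpa [hcN n h] using hd n
    · convert! hcβ.add hdy using 2 with n
      push_cast; ring

/-- A set of digit sums that has both missing points and intervals arbitrarily close to `0` is a
Cantorval. -/
theorem isCantorval_digitSums {x : ℕ → ℝ} (hx : ∀ n, 0 < x n) (hs : Summable x) {k : ℕ}
    (hgap : ∀ ε > 0, ∃ z ∈ Ioo 0 ε, z ∉ digitSums x k)
    (hinterval : ∀ ε > 0, ∃ u v, 0 < u ∧ u < v ∧ v < ε ∧ Icc u v ⊆ digitSums x k) :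
    IsCantorval (digitSums x k) := by
  set M := (k : ℝ) * ∑' n, x n with hM
  have hle : ∀ y ∈ digitSums x k, y ≤ M := by
    rintro y ⟨c, hc, hy⟩
    exact hasSum_le (fun n => mul_le_mul_of_nonneg_right (by exact_mod_cast hc n) (hx n).le) hy
      (hs.hasSum.mul_left _)
  have hMS : M ∈ digitSums x k := total_mem_digitSums hs k
  have hrefl : ∀ y, y ∈ digitSums x k ↔ M - y ∈ digitSums x k := by
    intro y
    refine ⟨fun h => reflect_digitSums hs h, fun h => ?_⟩
    have := reflect_digitSums hs h
    rwa [← hM, sub_sub_cancel] at this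
  obtain ⟨u₀, v₀, hu₀, huv₀, -, hI₀⟩ := hinterval 1 one_pos
  have hM0 : 0 < M := (hu₀.trans huv₀).trans_le (hle _ (hI₀ (right_mem_Icc.2 huv₀.le)))
  obtain ⟨z₀, hz₀, hz₀S⟩ := hgap M hM0
  have hright : ∀ α β, α ∈ digitSums x k → β ∈ digitSums x k → α < β →
      Ioo α β ⊆ (digitSums x k)ᶜ → ∀ ε > 0,
      (∃ z ∈ Ioo β (β + ε), z ∉ digitSums x k ∧ ∃ t ∈ digitSums x k, z < t) ∧
      ∃ u v, β < u ∧ u < v ∧ v < β + ε ∧ Icc u v ⊆ digitSums x k := by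
    intro α β _ hβ hαβ hsub ε hε
    obtain ⟨δ, hδ0, hδ⟩ := local_translate hx hs hβ hαβ hsub
    have key : ∀ ε > 0, ∃ u v, β < u ∧ u < v ∧ v < β + ε ∧ Icc u v ⊆ digitSums x k := by
      intro ε hε
      obtain ⟨u, v, hu, huv, hv, hI⟩ := hinterval (min ε δ) (lt_min hε hδ0)
      have h1 := hv.trans_le (min_le_left _ _)
      have h2 := hv.trans_le (min_le_right _ _)
      refine ⟨β + u, β + v, by linarith, by linarith, by linarith, fun y hy => ?_⟩
      have := (hδ (y - β) (by linarith [hy.1]) (by linarith [hy.2])).2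
        (hI ⟨by linarith [hy.1], by linarith [hy.2]⟩)
      rwa [add_sub_cancel] at this
    refine ⟨?_, key ε hε⟩
    obtain ⟨u, v, hu, huv, hv, hI⟩ := key (min ε δ) (lt_min hε hδ0)
    have h1 := hv.trans_le (add_le_add_right (min_le_left ε δ) β)
    have h2 := hv.trans_le (add_le_add_right (min_le_right ε δ) β)
    obtain ⟨z, hz, hzS⟩ := hgap (u - β) (by linarith)
    refine ⟨β + z, ⟨by linarith [hz.1], by linarith [hz.2]⟩, fun h => hzS ?_, u,
      hI (left_mem_Icc.2 huv.le), by linarith [hz.2]⟩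
    exact (hδ z hz.1 (by linarith [hz.2])).1 h
  refine isCantorval_of_gap_endpoints (isCompact_digitSums hx hs k) (zero_mem_digitSums k) hMS hz₀S
    hz₀.1 hz₀.2 huv₀ hI₀ ?_ ?_
  · intro α β hα hβ hαβ hsub ε hε
    obtain ⟨h1, u, v, hu, huv, hv, hI⟩ := hright α β hα hβ hαβ hsub ε hε
    exact ⟨h1, u, v, huv, hI, hu, by linarith⟩
  · intro α β hα hβ hαβ hsub ε hε
    obtain ⟨⟨z, hz, hzS, t, htS, ht⟩, u, v, hu, huv, hv, hI⟩ :=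
      hright (M - β) (M - α) ((hrefl _).1 hβ) ((hrefl _).1 hα) (by linarith)
        (fun y hy h => hsub (show M - y ∈ Ioo α β from ⟨by linarith [hy.2], by linarith [hy.1]⟩)
          ((hrefl y).1 h)) ε hε
    refine ⟨⟨M - z, ⟨by linarith [hz.2], by linarith [hz.1]⟩, fun h => hzS ((hrefl z).2 h), M - t,
      (hrefl t).1 htS, by linarith⟩, M - v, M - u, by linarith, fun y hy => ?_, by linarith,
      by linarith⟩
    exact (hrefl y).2 (hI ⟨by linarith [hy.2], by linarith [hy.1]⟩)

/-! ### Interleaving two series -/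

/-- The sequence `a 0 + b 0, a 0, a 1 + b 1, a 1, …`. -/
noncomputable def interleave (a b : ℕ → ℝ) (n : ℕ) : ℝ :=
  a (n / 2) + if n % 2 = 0 then b (n / 2) else 0

lemma interleave_even (a b : ℕ → ℝ) (n : ℕ) : interleave a b (2 * n) = a n + b n := by
  have h : 2 * n / 2 = n := by omega
  simp [interleave, h]

lemma interleave_odd (a b : ℕ → ℝ) (n : ℕ) : interleave a b (2 * n + 1) = a n := by
  have h : (2 * n + 1) / 2 = n := by omega
  have h' : (2 * n + 1) % 2 = 1 := by omega
  simp [interleave, h, h']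

lemma interleave_pos {a b : ℕ → ℝ} (ha : ∀ n, 0 < a n) (hb : ∀ n, 0 < b n) (n : ℕ) :
    0 < interleave a b n := by
  have h1 := ha (n / 2)
  have h2 := hb (n / 2)
  unfold interleave
  split_ifs <;> linarith

lemma hasSum_interleave_tail {a b : ℕ → ℝ} (ha : Summable a) (hb : Summable b) (N : ℕ) :
    HasSum (fun i => interleave a b (i + 2 * N))
      (2 * ∑' i, a (i + N) + ∑' i, b (i + N)) := by
  have ha' := ((summable_nat_add_iff N).2 ha).hasSum
  have hb' := ((summable_nat_add_iff N).2 hb).hasSum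
  have h : 2 * ∑' i, a (i + N) + ∑' i, b (i + N)
      = (∑' i, a (i + N) + ∑' i, b (i + N)) + ∑' i, a (i + N) := by ring
  rw [h]
  refine HasSum.even_add_odd ?_ ?_
  · convert! ha'.add hb' using 2 with n
    rw [← interleave_even]; congr 1; ring
  · convert! ha' using 2 with n
    rw [← interleave_odd a b]; congr 1; ring

lemma summable_interleave {a b : ℕ → ℝ} (ha : Summable a) (hb : Summable b) :
    Summable (interleave a b) := by
  simpa using (hasSum_interleave_tail ha hb 0).summable

lemma hasSum_ite_lt {f : ℕ → ℝ} {N : ℕ} {s : ℝ} (h : HasSum (fun n => f (n + N)) s) :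
    HasSum (fun n => if n < N then 0 else f n) s := by
  let g : ℕ → ℝ := fun n => if n < N then 0 else f n
  have hg : ∀ n, g (n + N) = f (n + N) := fun n => if_neg (by omega)
  have h0 : ∑ i ∈ Finset.range N, g i = 0 :=
    Finset.sum_eq_zero fun i hi => if_pos (Finset.mem_range.1 hi)
  have h2 := (hasSum_nat_add_iff (f := g) N).1 (by simpa only [hg] using h)
  rwa [h0, add_zero] at h2

/-- Digits `e n` on `a n + b n` and `m - e n` on `a n` contribute `m * a n + e n * b n`, so the
digit sums of the interleaved sequence contain a translate of the digit sums of a tail of `b`. -/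
lemma Icc_subset_digitSums_interleave {a b : ℕ → ℝ} (ha : Summable a)
    (ha0 : ∀ n, 0 < a n) (hb : Summable b) (hb0 : ∀ n, 0 < b n) {m : ℕ}
    (hK : ∀ n, b n ≤ m * ∑' i, b (i + (n + 1))) (N : ℕ) :
    Icc (m * ∑' i, a (i + N)) (m * ∑' i, a (i + N) + m * ∑' i, b (i + N)) ⊆
      digitSums (interleave a b) m := by
  rintro y ⟨hy1, hy2⟩
  have hbN : Summable fun i => b (i + N) := (summable_nat_add_iff N).2 hb
  have haN : Summable fun i => a (i + N) := (summable_nat_add_iff N).2 ha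
  have hmem : y - m * ∑' i, a (i + N) ∈ digitSums (fun i => b (i + N)) m := by
    rw [digitSums_eq_Icc (fun n => hb0 _) hbN]
    · constructor <;> linarith
    · intro n
      convert! hK (n + N) using 5 with i
      omega
  obtain ⟨e, he, hsum⟩ := hmem
  obtain ⟨s, hs⟩ := summable_digits (fun n => ha0 (n + N)) haN he
  refine ⟨fun n => if n / 2 < N then 0 else if n % 2 = 0 then e (n / 2 - N)
    else m - e (n / 2 - N), ?_, ?_⟩
  · intro n
    have := he (n / 2 - N)
    dsimp only
    split_ifs <;> omega
  · have hy : y = ((y - m * ∑' i, a (i + N)) + s) + (m * ∑' i, a (i + N) - s) := by ring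
    rw [hy]
    refine HasSum.even_add_odd ?_ ?_
    · convert! hasSum_ite_lt (N := N) (f := fun n => (e (n - N) : ℝ) * (a n + b n))
        (s := (y - m * ∑' i, a (i + N)) + s) ?_ using 2 with n
      · have h : 2 * n / 2 = n := by omega
        dsimp only
        have h' : 2 * n % 2 = 0 := by omega
        rw [interleave_even, h, h', if_pos rfl]
        split_ifs with h1
        · simp
        · rfl
      · convert! hsum.add hs using 2 with n
        simp only [Nat.add_sub_cancel]
        ring
    · convert! hasSum_ite_lt (N := N) (f := fun n => ((m - e (n - N) : ℕ) : ℝ) * a n)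
        (s := m * ∑' i, a (i + N) - s) ?_ using 2 with n
      · have h : (2 * n + 1) / 2 = n := by omega
        have h' : (2 * n + 1) % 2 = 1 := by omega
        dsimp only
        rw [interleave_odd, h, h', if_neg one_ne_zero]
        split_ifs with h1
        · simp
        · rfl
      · convert! (haN.hasSum.mul_left (m : ℝ)).sub hs using 2 with n
        simp only [Nat.add_sub_cancel]
        rw [Nat.cast_sub (he n)]
        ring

/-- If the first `N` terms are at least `θ` while `k` times the remaining sum is below `θ`, no
digit sum falls strictly between. -/
lemma exists_notMem_digitSums {x : ℕ → ℝ} (hx : ∀ n, 0 < x n) (hs : Summable x) {k N : ℕ}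
    {θ ε : ℝ} (hθε : θ < ε) (hN : ∀ i < N, θ ≤ x i) (hr : k * ∑' i, x (i + N) < θ) :
    ∃ z ∈ Ioo 0 ε, z ∉ digitSums x k := by
  have h0 : (0 : ℝ) ≤ k * ∑' i, x (i + N) :=
    mul_nonneg (Nat.cast_nonneg _) (tsum_nonneg fun i => (hx _).le)
  obtain ⟨z, hz1, hz2⟩ := exists_between hr
  refine ⟨z, ⟨by linarith, by linarith⟩, ?_⟩
  rintro ⟨c, hc, hz⟩
  by_cases h : ∃ i < N, c i ≠ 0
  · obtain ⟨i, hi, hci⟩ := h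
    have h1 : (c i : ℝ) * x i ≤ z := le_hasSum hz i fun j _ => digits_nonneg hx c j
    have h2 : (1 : ℝ) ≤ c i := by exact_mod_cast Nat.one_le_iff_ne_zero.2 hci
    nlinarith [hN i hi, hx i]
  · push Not at h
    have h1 := (hasSum_nat_add_iff' N).2 hz
    rw [Finset.sum_eq_zero, sub_zero] at h1
    · have h2 : z ≤ k * ∑' i, x (i + N) :=
        hasSum_le (fun n => mul_le_mul_of_nonneg_right (by exact_mod_cast hc _) (hx _).le) h1
          (((summable_nat_add_iff N).2 hs).hasSum.mul_left _)
      linarith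
    · intro i hi
      simp [h i (Finset.mem_range.1 hi)]

/-! ### The construction for finite `m` -/

/-- The sequence `a` is built to be constant, equal to `P j * q ^ T j / m`, on the `j`-th block of
indices, which ends at `T j`. The block ends grow so fast that the sum of `a` after the `j`-th block
is negligible compared with `q ^ T j`, and even at most `(q ^ (T j + 1)) ^ L`. -/
lemma exists_blocks {m L : ℕ} (hm : 2 ≤ m) (hL : 1 ≤ L) {P : ℕ → ℕ} (hP : ∀ j, 1 ≤ P j)
    (hPm : Monotone P) {q : ℝ} (hq0 : 0 < q) (hq : 2 * q < 1) :
    ∃ (a : ℕ → ℝ) (T : ℕ → ℕ), (∀ n, 0 < a n) ∧ Summable a ∧ StrictMono T ∧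
      (∀ n, ∃ j, a n ≤ P j * q ^ n / m) ∧
      (∀ j, ∀ i ≤ T j, P j * q ^ T j / m ≤ a i) ∧
      ∀ j, ∑' i, a (i + (T j + 1)) ≤ q ^ (L * (T j + 1)) / (2 * P j) / m := by
  have hm0 : (0 : ℝ) < m := by exact_mod_cast (by omega : 0 < m)
  have hP0 : ∀ j, (0 : ℝ) < P j := fun j => by exact_mod_cast hP j
  let w : ℕ → ℕ → ℝ := fun j t => q ^ (L * (t + 1)) / (2 * P j)
  have hw0 : ∀ j t, 0 < w j t := fun j t =>
    div_pos (pow_pos hq0 _) (mul_pos two_pos (hP0 j))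
  have hex : ∀ j t, ∃ t', t < t' ∧ P (j + 1) * (2 * q) ^ t' ≤ w j t := by
    intro j t
    have h : Tendsto (fun n : ℕ => (P (j + 1) : ℝ) * (2 * q) ^ n) atTop (𝓝 0) := by
      simpa using (tendsto_pow_atTop_nhds_zero_of_lt_one (by positivity) hq).const_mul
        (P (j + 1) : ℝ)
    obtain ⟨t', h1, h2⟩ := ((h.eventually_le_const (hw0 j t)).and (eventually_gt_atTop t)).exists
    exact ⟨t', h2, h1⟩
  choose g hg1 hg2 using hex
  let T : ℕ → ℕ := fun n => Nat.rec 0 (fun j t => g j t) n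
  have hT : ∀ j, T (j + 1) = g j (T j) := fun j => rfl
  have hTm : StrictMono T := strictMono_nat_of_lt_succ fun j => by rw [hT]; exact hg1 _ _
  have hTw : ∀ j, P (j + 1) * (2 * q) ^ T (j + 1) ≤ w j (T j) := fun j => by
    rw [hT]; exact hg2 _ _
  have hwa : Antitone fun j => w j (T j) := by
    refine antitone_nat_of_succ_le fun j => ?_
    refine div_le_div₀ (by positivity) ?_ (mul_pos two_pos (hP0 j)) ?_
    · refine pow_le_pow_of_le_one hq0.le (by linarith) ?_
      exact Nat.mul_le_mul_left _ (by have := hTm (Nat.lt_add_one j); omega)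
    · have : (P j : ℝ) ≤ P (j + 1) := by exact_mod_cast hPm (Nat.le_succ j)
      linarith
  have hJex : ∀ n, ∃ j, n ≤ T j ∧ ∀ i, n ≤ T i → j ≤ i := by
    intro n
    have h : ∃ j, n ≤ T j := ⟨n, hTm.le_apply⟩
    exact ⟨sInf {j | n ≤ T j}, Nat.sInf_mem h, fun i hi => Nat.sInf_le hi⟩
  choose J hJ hJle using hJex
  have hJlt : ∀ {n j}, T j < n → j < J n := fun {n j} h => by
    by_contra hcon
    have := hTm.monotone (not_lt.1 hcon)
    have := hJ n
    omega
  let A : ℕ → ℝ := fun j => P j * q ^ T j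
  have hA0 : ∀ j, 0 < A j := fun j => mul_pos (hP0 j) (pow_pos hq0 _)
  -- `(2 q) ^ T = 2 ^ T * q ^ T` turns the defining inequality of `T` into geometric decay.
  have hAw : ∀ j, A (j + 1) ≤ w j (T j) * (1 / 2) ^ T (j + 1) := by
    intro j
    have h := hTw j
    have e : A (j + 1) = P (j + 1) * (2 * q) ^ T (j + 1) * (1 / 2) ^ T (j + 1) := by
      rw [mul_assoc, ← mul_pow]
      simp only [A]
      congr 2
      ring
    rw [e]
    exact mul_le_mul_of_nonneg_right h (by positivity)
  have hAanti : Antitone A := by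
    refine antitone_nat_of_succ_le fun j => ?_
    have hPj : (1 : ℝ) ≤ P j := by exact_mod_cast hP j
    calc A (j + 1) ≤ w j (T j) * (1 / 2) ^ T (j + 1) := hAw j
      _ ≤ w j (T j) :=
        mul_le_of_le_one_right (hw0 _ _).le (pow_le_one₀ (by norm_num) (by norm_num))
      _ ≤ q ^ (L * (T j + 1)) := div_le_self (by positivity) (by linarith)
      _ ≤ q ^ T j := pow_le_pow_of_le_one hq0.le (by linarith) (by nlinarith)
      _ ≤ A j := le_mul_of_one_le_left (by positivity) hPj
  have hai : ∀ j i, T j < i → A (J i) ≤ w j (T j) * (1 / 2) ^ i := by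
    intro j i h
    have h1 := hJlt h
    obtain ⟨l, hl⟩ : ∃ l, J i = l + 1 := ⟨J i - 1, by omega⟩
    have h2 := hJ i
    rw [hl] at h1 h2 ⊢
    refine (hAw l).trans ?_
    refine mul_le_mul (hwa (by omega : j ≤ l)) ?_ (by positivity) (hw0 _ _).le
    exact pow_le_pow_of_le_one (by norm_num) (by norm_num) h2
  have hgeo : ∀ j, Summable fun i : ℕ => w j (T j) * (1 / 2 : ℝ) ^ (i + (T j + 1)) / m :=
    fun j => (((summable_nat_add_iff (T j + 1)).2 summable_geometric_two).mul_left _).div_const _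
  have hle : ∀ j i, A (J (i + (T j + 1))) / m ≤ w j (T j) * (1 / 2 : ℝ) ^ (i + (T j + 1)) / m :=
    fun j i => div_le_div_of_nonneg_right (hai j _ (by omega)) hm0.le
  have hsumm : ∀ j, Summable fun i => A (J (i + (T j + 1))) / m := fun j =>
    Summable.of_nonneg_of_le (fun i => (div_pos (hA0 _) hm0).le) (hle j) (hgeo j)
  refine ⟨fun n => A (J n) / m, T, fun n => div_pos (hA0 _) hm0,
    (summable_nat_add_iff (T 0 + 1)).1 (hsumm 0), hTm, fun n => ⟨J n, ?_⟩, fun j i hi => ?_,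
    fun j => ?_⟩
  · refine div_le_div_of_nonneg_right ?_ hm0.le
    exact mul_le_mul_of_nonneg_left (pow_le_pow_of_le_one hq0.le (by linarith) (hJ n)) (hP0 _).le
  · exact div_le_div_of_nonneg_right (hAanti (hJle i j hi)) hm0.le
  · refine ((hsumm j).tsum_le_tsum (hle j) (hgeo j)).trans ?_
    rw [tsum_div_const, tsum_mul_left]
    refine div_le_div_of_nonneg_right ?_ hm0.le
    refine mul_le_of_le_one_right (hw0 _ _).le ?_
    have h1 : ∑' i : ℕ, (1 / 2 : ℝ) ^ (i + (T j + 1)) = 2 * (1 / 2) ^ (T j + 1) := by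
      simp_rw [pow_add _ _ (T j + 1)]
      rw [tsum_mul_right, tsum_geometric_two]
    rw [h1, pow_succ]
    have : (1 / 2 : ℝ) ^ T j ≤ 1 := pow_le_one₀ (by norm_num) (by norm_num)
    linarith

lemma tsum_pow_tail {m : ℕ} (hm : 2 ≤ m) (n : ℕ) :
    ∑' i, (1 / (m + 1) : ℝ) ^ (i + (n + 1)) = (1 / (m + 1) : ℝ) ^ n / m := by
  have hm0 : (0 : ℝ) < m := by exact_mod_cast (by omega : 0 < m)
  have h1 : (1 / (m + 1) : ℝ) < 1 := by
    rw [div_lt_one (by linarith)]; linarith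
  simp_rw [pow_add _ _ (n + 1)]
  rw [tsum_mul_right, tsum_geometric_of_lt_one (by positivity) h1, pow_succ]
  have h2 : (1 : ℝ) - 1 / (m + 1) = m / (m + 1) := by field_simp; ring
  rw [h2]
  field_simp

/-- The sequence for finite `m`: the terms are `a n + q ^ n` and `a n` with `q = 1 / (m + 1)` and `a`
as in `exists_blocks`. -/
lemma exists_sequence {m : ℕ} (hm : 2 ≤ m) {P : ℕ → ℕ} (hP : ∀ j, m ≤ P j) (hPm : Monotone P) :
    ∃ x : ℕ → ℝ, (∀ n, 0 < x n) ∧ Summable x ∧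
      (∀ k, 1 ≤ k → k < m → IsCantorSet (digitSums x k)) ∧
      (∀ k, m ≤ k → (∃ j, k < P j) → IsCantorval (digitSums x k)) ∧
      (∀ k, (∀ j, P j ≤ k) → ∃ u v : ℝ, u < v ∧ digitSums x k = Icc u v) := by
  have hm0 : (0 : ℝ) < m := by exact_mod_cast (by omega : 0 < m)
  have hm2 : (2 : ℝ) ≤ m := by exact_mod_cast hm
  have hP0 : ∀ j, (0 : ℝ) < P j := fun j => by exact_mod_cast (by have := hP j; omega : 0 < P j)
  obtain ⟨q, hq⟩ : ∃ q : ℝ, q = 1 / (m + 1) := ⟨_, rfl⟩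
  have hq0 : 0 < q := by rw [hq]; positivity
  have hq1 : q * (m + 1) = 1 := by rw [hq]; field_simp
  have hq2 : 2 * q < 1 := by nlinarith
  have hmq : m * q < 1 := by nlinarith
  have hbs : Summable fun n : ℕ => q ^ n := summable_geometric_of_lt_one hq0.le (by linarith)
  have hb0 : ∀ n : ℕ, 0 < q ^ n := fun n => pow_pos hq0 n
  have hbt : ∀ n : ℕ, ∑' i, q ^ (i + (n + 1)) = q ^ n / m := by
    rw [hq]; exact tsum_pow_tail hm
  obtain ⟨L, hL⟩ := exists_pow_lt_of_lt_one (show (0 : ℝ) < 1 / m ^ 2 by positivity) hmq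
  have hL1 : 1 ≤ L := by
    by_contra hcon
    have : L = 0 := by omega
    rw [this, pow_zero, lt_div_iff₀ (by positivity)] at hL
    nlinarith
  obtain ⟨a, T, ha0, has, hT, hle, hge, htail⟩ :=
    exists_blocks (L := L) hm hL1 (fun j => by have := hP j; omega) hPm hq0 hq2
  obtain ⟨x, hx⟩ : ∃ x, x = interleave a fun n => q ^ n := ⟨_, rfl⟩
  have hx0 : ∀ n, 0 < x n := by rw [hx]; exact interleave_pos ha0 hb0
  have hxs : Summable x := by rw [hx]; exact summable_interleave has hbs
  have hxe : ∀ n, x (2 * n) = a n + q ^ n := by rw [hx]; exact interleave_even _ _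
  have hxo : ∀ n, x (2 * n + 1) = a n := by rw [hx]; exact interleave_odd _ _
  have hxt : ∀ N, ∑' i, x (i + 2 * N) = 2 * ∑' i, a (i + N) + ∑' i, q ^ (i + N) := by
    rw [hx]; exact fun N => (hasSum_interleave_tail has hbs N).tsum_eq
  have ha0t : ∀ N, 0 < ∑' i, a (i + N) := fun N =>
    ((summable_nat_add_iff N).2 has).tsum_pos (fun i => (ha0 _).le) 0 (ha0 _)
  refine ⟨x, hx0, hxs, ?_, ?_, ?_⟩
  · intro k hk1 hkm
    have hkm' : (k : ℝ) + 1 ≤ m := by exact_mod_cast hkm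
    refine isCantorSet_digitSums hx0 hxs hk1 fun ε hε => ?_
    -- For every block end `T j` the bound obtained is `4 * (1 / m) ^ T j`.
    have hlim : Tendsto (fun j => 4 * (1 / m : ℝ) ^ T j) atTop (𝓝 0) := by
      have h1 : (1 / m : ℝ) < 1 := by rw [div_lt_one hm0]; linarith
      simpa using ((tendsto_pow_atTop_nhds_zero_of_lt_one (by positivity) h1).comp
        hT.tendsto_atTop).const_mul (4 : ℝ)
    obtain ⟨j, hj⟩ := (hlim.eventually_lt_const hε).exists
    obtain ⟨t, ht⟩ : ∃ t, t = T j := ⟨_, rfl⟩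
    obtain ⟨N, hN⟩ : ∃ N, N = L * (t + 1) := ⟨_, rfl⟩
    have hNt : t + 1 ≤ N := by rw [hN]; exact Nat.le_mul_of_pos_left _ hL1
    refine ⟨(Finset.range N).image (fun i => 2 * i) ∪
      (Finset.range (t + 1)).image (fun i => 2 * i + 1),
      (∑' i, a (i + N) + ∑' i, q ^ (i + N)) + ∑' i, a (i + (t + 1)), ?_, ?_⟩
    · refine HasSum.even_add_odd ?_ ?_
      · convert! hasSum_ite_lt (N := N) (f := fun n => a n + q ^ n)
          (((summable_nat_add_iff N).2 has).hasSum.add ((summable_nat_add_iff N).2 hbs).hasSum)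
          using 2 with n
        rw [hxe]
        congr 1
        simp only [Finset.mem_union, Finset.mem_image, Finset.mem_range, eq_iff_iff]
        constructor
        · rintro (⟨i, hi, h⟩ | ⟨i, hi, h⟩) <;> omega
        · exact fun h => Or.inl ⟨n, h, rfl⟩
      · convert! hasSum_ite_lt (N := t + 1) (f := a)
          ((summable_nat_add_iff (t + 1)).2 has).hasSum using 2 with n
        rw [hxo]
        congr 1
        simp only [Finset.mem_union, Finset.mem_image, Finset.mem_range, eq_iff_iff]
        constructor
        · rintro (⟨i, hi, h⟩ | ⟨i, hi, h⟩) <;> omega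
        · exact fun h => Or.inr ⟨n, h, rfl⟩
    · have hcard : ((Finset.range N).image (fun i => 2 * i) ∪
          (Finset.range (t + 1)).image (fun i => 2 * i + 1)).card ≤ N + (t + 1) := by
        refine (Finset.card_union_le _ _).trans (add_le_add ?_ ?_)
        · simpa using Finset.card_image_le (s := Finset.range N) (f := fun i => 2 * i)
        · simpa using Finset.card_image_le (s := Finset.range (t + 1)) (f := fun i => 2 * i + 1)
      have hη1 : ∑' i, a (i + (t + 1)) ≤ q ^ N := by
        have hPj := hP0 j
        have hPj1 : (m : ℝ) ≤ P j := by exact_mod_cast hP j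
        rw [hN, ht]
        refine (htail j).trans ?_
        rw [div_div]
        refine div_le_self (by positivity) ?_
        nlinarith
      have hη2 : ∑' i, a (i + N) ≤ ∑' i, a (i + (t + 1)) := by
        obtain ⟨d, hd⟩ := Nat.exists_eq_add_of_le hNt
        have h := ((summable_nat_add_iff (t + 1)).2 has).sum_add_tsum_nat_add d
        have h2 : 0 ≤ ∑ i ∈ Finset.range d, a (i + (t + 1)) :=
          Finset.sum_nonneg fun i _ => (ha0 _).le
        have h3 : ∑' i, a (i + N) = ∑' i, a (i + d + (t + 1)) :=
          tsum_congr fun i => by congr 1; omega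
        linarith
      have hη3 : ∑' i, q ^ (i + N) ≤ 2 * q ^ N := by
        rw [tail_succ hbs N, hbt]
        have : q ^ N / m ≤ q ^ N := div_le_self (hb0 N).le (by linarith)
        linarith
      have hη0 : 0 ≤ (∑' i, a (i + N) + ∑' i, q ^ (i + N)) + ∑' i, a (i + (t + 1)) := by
        have h1 := ha0t N
        have h2 := ha0t (t + 1)
        have h3 : 0 ≤ ∑' i, q ^ (i + N) := tsum_nonneg fun i => (hb0 _).le
        linarith
      refine lt_of_le_of_lt ?_ hj
      calc _ ≤ (m : ℝ) ^ (N + (t + 1)) * (m * (4 * q ^ N)) := by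
            refine mul_le_mul ?_ ?_ (mul_nonneg (Nat.cast_nonneg _) hη0) (by positivity)
            · exact (pow_le_pow_left₀ (by positivity) hkm' _).trans
                (pow_le_pow_right₀ (by linarith) hcard)
            · exact mul_le_mul (by linarith) (by linarith) hη0 hm0.le
        _ = 4 * m * ((m * q) ^ L) ^ (t + 1) * m ^ (t + 1) := by
            rw [← pow_mul, ← hN, mul_pow, pow_add]; ring
        _ ≤ 4 * m * (1 / m ^ 2) ^ (t + 1) * m ^ (t + 1) := by
            gcongr
        _ = 4 * (1 / m) ^ T j := by
            rw [mul_assoc, ← mul_pow, ← ht, pow_succ]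
            have : (1 / m ^ 2 * m : ℝ) = 1 / m := by field_simp
            rw [this]
            field_simp
  · rintro k hk ⟨l, hl⟩
    refine isCantorval_digitSums hx0 hxs (fun ε hε => ?_) (fun ε hε => ?_)
    · have hlim : Tendsto (fun j => a (T j)) atTop (𝓝 0) :=
        has.tendsto_atTop_zero.comp hT.tendsto_atTop
      obtain ⟨j, hj, hlj⟩ := ((hlim.eventually_lt_const hε).and (eventually_ge_atTop l)).exists
      have hkP : (k : ℝ) + 1 ≤ P j := by
        exact_mod_cast (lt_of_lt_of_le hl (hPm hlj) : k < P j)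
      refine exists_notMem_digitSums hx0 hxs (N := 2 * (T j + 1))
        (lt_of_le_of_lt (hge j _ le_rfl) hj) (fun i hi => ?_) ?_
      · rcases Nat.even_or_odd' i with ⟨n, rfl | rfl⟩
        · rw [hxe]
          have := hge j n (by omega)
          have := hb0 n
          linarith
        · rw [hxo]
          exact hge j n (by omega)
      · rw [hxt, hbt]
        have h1 := htail j
        have h2 : q ^ (L * (T j + 1)) ≤ q ^ T j :=
          pow_le_pow_of_le_one hq0.le (by linarith) (by nlinarith)
        have h3 : 2 * ∑' i, a (i + (T j + 1)) ≤ q ^ T j / P j / m := by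
          have e : q ^ T j / P j / m = 2 * (q ^ T j / (2 * P j) / m) := by
            have := (hP0 j).ne'
            field_simp
          rw [e]
          have hPj := hP0 j
          refine mul_le_mul_of_nonneg_left (h1.trans ?_) two_pos.le
          gcongr
        calc (k : ℝ) * (2 * ∑' i, a (i + (T j + 1)) + q ^ T j / m)
            ≤ (P j - 1) * (q ^ T j / P j / m + q ^ T j / m) := by
              have h4 := (ha0t (T j + 1)).le
              have h5 := hb0 (T j)
              refine mul_le_mul (by linarith) (by linarith) (by positivity) ?_
              have : (0 : ℝ) ≤ k := Nat.cast_nonneg _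
              linarith
          _ = P j * q ^ T j / m - q ^ T j / P j / m := by
              have := (hP0 j).ne'
              field_simp
              ring
          _ < P j * q ^ T j / m := by
              have hPj := hP0 j
              have h5 := hb0 (T j)
              have : 0 < q ^ T j / P j / m := by positivity
              linarith
    · have hlim : Tendsto (fun N => m * ∑' i, a (i + N) + m * ∑' i, q ^ (i + N)) atTop (𝓝 0) := by
        simpa using ((tendsto_sum_nat_add a).const_mul (m : ℝ)).add
          ((tendsto_sum_nat_add fun n : ℕ => q ^ n).const_mul (m : ℝ))
      obtain ⟨N, hN⟩ := (hlim.eventually_lt_const hε).exists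
      have hbN : 0 < ∑' i, q ^ (i + N) :=
        ((summable_nat_add_iff N).2 hbs).tsum_pos (fun i => (hb0 _).le) 0 (hb0 _)
      refine ⟨_, _, mul_pos hm0 (ha0t N), lt_add_of_pos_right _ (mul_pos hm0 hbN), hN, ?_⟩
      rw [hx]
      refine (Icc_subset_digitSums_interleave has ha0 hbs hb0 (fun n => ?_) N).trans
        (digitSums_mono hk)
      rw [hbt, mul_div_cancel₀ _ hm0.ne']
  · intro k hk
    have hkm : (m : ℝ) ≤ k := by exact_mod_cast (hP 0).trans (hk 0)
    have hak : ∀ n, a n ≤ k * (q ^ n / m) := by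
      intro n
      obtain ⟨j, hj⟩ := hle n
      have h1 : (P j : ℝ) ≤ k := by exact_mod_cast hk j
      have h2 := hb0 n
      refine hj.trans ?_
      rw [mul_div_assoc]
      gcongr
    refine ⟨0, k * ∑' n, x n, mul_pos (by linarith) (hxs.tsum_pos (fun i => (hx0 _).le) 0 (hx0 _)),
      digitSums_eq_Icc hx0 hxs fun n => ?_⟩
    have hodd : ∀ n, q ^ n / m ≤ ∑' i, x (i + (2 * n + 1 + 1)) := by
      intro n
      have e : 2 * n + 1 + 1 = 2 * (n + 1) := by ring
      rw [e, hxt, hbt]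
      have := ha0t (n + 1)
      linarith
    have hk0 : (0 : ℝ) ≤ k := Nat.cast_nonneg _
    rcases Nat.even_or_odd' n with ⟨n, rfl | rfl⟩
    · rw [tail_succ hxs, hxe, hxo]
      have h1 := mul_le_mul_of_nonneg_left (hodd n) hk0
      have h2 : q ^ n ≤ k * (q ^ n / m) := by
        rw [mul_div_assoc', le_div_iff₀ hm0, mul_comm]
        exact mul_le_mul_of_nonneg_right hkm (hb0 n).le
      have h3 : a n ≤ k * a n := le_mul_of_one_le_left (ha0 n).le (by linarith)
      linarith
    · rw [hxo]
      exact (hak n).trans (mul_le_mul_of_nonneg_left (hodd n) hk0)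

/-! ### The case `m = ∞` -/

/-- The terms `2 ^ (-n ^ 2)` decrease so fast that all multiple sumsets are Cantor sets. -/
lemma exists_sequence_top :
    ∃ x : ℕ → ℝ, (∀ n, 0 < x n) ∧ Summable x ∧
      ∀ k, 1 ≤ k → IsCantorSet (digitSums x k) := by
  have hx0 : ∀ n : ℕ, (0 : ℝ) < (1 / 2) ^ (n ^ 2) := fun n => by positivity
  -- `(n + i) ^ 2 ≥ n ^ 2 + i` bounds the tails by geometric series.
  have hb : ∀ n i : ℕ, (1 / 2 : ℝ) ^ ((i + n) ^ 2) ≤ (1 / 2) ^ (n ^ 2) * (1 / 2) ^ i := by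
    intro n i
    rw [← pow_add]
    refine pow_le_pow_of_le_one (by norm_num) (by norm_num) ?_
    have h : i ≤ i ^ 2 := Nat.le_self_pow two_ne_zero i
    nlinarith [Nat.zero_le (i * n)]
  have hs : Summable fun n : ℕ => (1 / 2 : ℝ) ^ (n ^ 2) :=
    Summable.of_nonneg_of_le (fun n => (hx0 n).le) (fun n => by simpa using hb 0 n)
      summable_geometric_two
  refine ⟨fun n => (1 / 2) ^ (n ^ 2), hx0, hs, fun k hk => ?_⟩
  refine isCantorSet_digitSums hx0 hs hk fun ε hε => ?_
  have ht : ∀ n, ∑' i, (1 / 2 : ℝ) ^ ((i + n) ^ 2) ≤ 2 * (1 / 2) ^ (n ^ 2) := by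
    intro n
    refine (((summable_nat_add_iff n).2 hs).tsum_le_tsum (hb n)
      (summable_geometric_two.mul_left _)).trans ?_
    rw [tsum_mul_left, tsum_geometric_two, mul_comm]
  -- Once `k + 1 ≤ 2 ^ (n - 1)`, the bound is at most `2 k / 2 ^ n`.
  have hlim : Tendsto (fun n : ℕ => 2 * k * (1 / 2 : ℝ) ^ n) atTop (𝓝 0) := by
    simpa using (tendsto_pow_atTop_nhds_zero_of_lt_one (by norm_num)
      (by norm_num : (1 / 2 : ℝ) < 1)).const_mul (2 * k : ℝ)
  obtain ⟨n, hn, hnk⟩ := ((hlim.eventually_lt_const hε).and (eventually_ge_atTop (k + 1))).exists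
  refine ⟨Finset.range n, ∑' i, (1 / 2 : ℝ) ^ ((i + n) ^ 2), ?_, lt_of_le_of_lt ?_ hn⟩
  · simp only [Finset.mem_range]
    exact hasSum_ite_lt (f := fun n : ℕ => (1 / 2 : ℝ) ^ (n ^ 2))
      ((summable_nat_add_iff n).2 hs).hasSum
  · rw [Finset.card_range]
    have h2 : (k + 1 : ℝ) * (1 / 2) ^ (n - 1) ≤ 1 := by
      rw [one_div, inv_pow, ← div_eq_mul_inv, div_le_one (by positivity)]
      have h3 : k + 1 ≤ 2 ^ (n - 1) := by
        have h4 : n - 1 < 2 ^ (n - 1) := Nat.lt_two_pow_self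
        omega
      exact_mod_cast h3
    have e : (1 / 2 : ℝ) ^ (n ^ 2) = ((1 / 2) ^ (n - 1)) ^ n * (1 / 2) ^ n := by
      rw [← pow_mul, ← pow_add]
      congr 1
      obtain ⟨d, rfl⟩ : ∃ d, n = d + 1 := ⟨n - 1, by omega⟩
      rw [Nat.add_sub_cancel]
      ring
    calc _ ≤ (k + 1 : ℝ) ^ n * (k * (2 * (1 / 2) ^ (n ^ 2))) := by gcongr; exact ht n
      _ = ((k + 1 : ℝ) * (1 / 2) ^ (n - 1)) ^ n * (2 * k * (1 / 2) ^ n) := by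
        rw [e, mul_pow]; ring
      _ ≤ 1 * (2 * k * (1 / 2) ^ n) := by
        refine mul_le_mul_of_nonneg_right (pow_le_one₀ (by positivity) h2) (by positivity)
      _ = _ := one_mul _

/-- (Marchwicki–Nowakowski–Prus-Wiśniowski) For every `m, p ∈ ℕ ∪ {∞}` with
`2 ≤ m ≤ p` there is an achievable Cantor set `C` such that the `k`-fold sumset
`C_k` is a Cantor set for `k < m`, a Cantorval for `m ≤ k < p`, and a nondegenerate
compact interval for `k ≥ p`. -/
theorem exists_cantor_with_prescribed_sumset_types (m p : ℕ∞)
    (hm : 2 ≤ m) (hmp : m ≤ p) :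
    ∃ x : ℕ → ℝ, (∀ n, 1 ≤ n → 0 < x n) ∧ Summable x ∧
      IsCantorSet (achievementSet x) ∧
      ∀ k : ℕ, 1 ≤ k →
        (((k : ℕ∞) < m → IsCantorSet (iterSumSet (achievementSet x) k)) ∧
         (m ≤ (k : ℕ∞) ∧ (k : ℕ∞) < p → IsCantorval (iterSumSet (achievementSet x) k)) ∧
         (p ≤ (k : ℕ∞) → ∃ a b : ℝ, a < b ∧ iterSumSet (achievementSet x) k = Set.Icc a b)) := by
  -- It suffices to describe the digit sums of a sequence indexed from `0`.
  suffices h : ∃ x : ℕ → ℝ, (∀ n, 0 < x n) ∧ Summable x ∧ ∀ k : ℕ, 1 ≤ k →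
      (((k : ℕ∞) < m → IsCantorSet (digitSums x k)) ∧
       (m ≤ (k : ℕ∞) ∧ (k : ℕ∞) < p → IsCantorval (digitSums x k)) ∧
       (p ≤ (k : ℕ∞) → ∃ a b : ℝ, a < b ∧ digitSums x k = Set.Icc a b)) by
    obtain ⟨x, hx, hs, h⟩ := h
    refine ⟨fun n => x (n - 1), fun n _ => hx _, (summable_nat_add_iff 1).1 (by simpa using hs), ?_⟩
    rw [achievementSet_shift]
    simp only [iterSumSet_digitSums hx hs]
    refine ⟨(h 1 le_rfl).1 ?_, h⟩
    exact lt_of_lt_of_le (by norm_num) hm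
  induction m using ENat.recTopCoe with
  | top =>
    obtain rfl : p = ⊤ := top_le_iff.1 hmp
    obtain ⟨x, hx, hs, h⟩ := exists_sequence_top
    refine ⟨x, hx, hs, fun k hk => ⟨fun _ => h k hk, fun hk' => ?_, fun hk' => ?_⟩⟩
    · exact absurd hk'.1 (by simp)
    · exact absurd hk' (by simp)
  | coe m =>
    have hm' : 2 ≤ m := by exact_mod_cast hm
    induction p using ENat.recTopCoe with
    | top =>
      obtain ⟨x, hx, hs, h1, h2, -⟩ := exists_sequence hm' (P := fun j => m + j)
        (fun j => Nat.le_add_right _ _) (fun i j h => Nat.add_le_add_left h m)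
      refine ⟨x, hx, hs, fun k hk => ⟨fun hk' => h1 k hk (by exact_mod_cast hk'),
        fun hk' => h2 k (by exact_mod_cast hk'.1) ⟨k, by omega⟩, fun hk' => ?_⟩⟩
      exact absurd hk' (by simp)
    | coe p =>
      have hmp' : m ≤ p := by exact_mod_cast hmp
      obtain ⟨x, hx, hs, h1, h2, h3⟩ := exists_sequence hm' (P := fun _ => p)
        (fun j => hmp') (fun i j h => le_rfl)
      exact ⟨x, hx, hs, fun k hk => ⟨fun hk' => h1 k hk (by exact_mod_cast hk'),
        fun hk' => h2 k (by exact_mod_cast hk'.1) ⟨0, by exact_mod_cast hk'.2⟩,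
        fun hk' => h3 k fun _ => by exact_mod_cast hk'⟩⟩
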